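/- Let φ be a smooth function of the lattice variables u_{m1},…,u_{m2} (m1 ≥ m2). Then the two conditions δφ/δu_0 = 0 and δ̄φ/δ̄u_0 = 0 hold identically if and only if there exist a constant κ and a smooth function q of finitely many lattice variables such that φ = κ + (T²−1)q identically, i.e. φ(u_{m1},…,u_{m2}) = κ + q(u_{p+2},…,u_{q+2}) − q(u_p,…,u_q) for all real sequences (u_j). (This is the content of the paper's Theorems 2 and 3, giving the representations 2 D_t log a_0 = κ⁺ + (T²−1)q⁺ and 2 D_t log b_0 = κ⁻ + (T⁻²−1)q⁻.) -/

import Mathlib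

/-! For weights `s = ±1` put `E_s φ = ∑ₖ sᵏ T⁻ᵏ(∂φ/∂uₖ)`; these are the two variational derivatives.
Since `s² = 1`, the substitution `k ↦ k + 2` gives `E_s (T² q) = E_s q`, so that `E_s` kills
constants and the image of `T² - 1` (`varSum_eq_of_eq_add`). This is the backward implication.

Conversely, suppose `E_1 φ = E_{-1} φ = 0` and `φ` depends on `u_m, …, u_N`. Adding the two
equations with suitable signs keeps exactly the indices `k ≡ N (mod 2)`, which expresses
`∂φ/∂u_N` as minus the sum of `T^{N-k}(∂φ/∂uₖ)` over `m ≤ k ≤ N - 2`, `k ≡ N (mod 2)`. Hence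
`∂φ/∂u_N` does not involve `u_m` and `u_{m+1}` (`pd_top_congr`), and it vanishes if `N < m + 2`
(`pd_top_eq_zero`). Split `φ = A + B` with `A = φ|_{u_N = 0}`; then `B` depends on
`u_{m+2}, …, u_N` only, so `φ` equals `A + T⁻² B`, a function of `u_m, …, u_{N-1}`, plus
`(T² - 1) T⁻² B`. Induction on the length of the window finishes the proof, the empty window
leaving a constant.

Smoothness is carried through the induction by the predicate `LatticeSmooth`, whose stability under
shifts, sums and substitutions is immediate. -/

open Finset

noncomputable section

/-- The shift operator: `(shift s u) j = u (j + s)`, so that for a lattice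
function `F`, `(T^s F) u = F (shift s u)`. -/
def shift (s : ℤ) (u : ℤ → ℝ) : ℤ → ℝ := fun j => u (j + s)

/-- Partial derivative of a lattice function `φ` with respect to the lattice
variable `u_k`, evaluated at the sequence `u`. -/
def pd (φ : (ℤ → ℝ) → ℝ) (k : ℤ) (u : ℤ → ℝ) : ℝ :=
  deriv (fun x => φ (Function.update u k x)) (u k)

/-- `φ` is a smooth function of the lattice variables `u_p, …, u_q` (q ≤ p):
it factors through a smooth function of the `p - q + 1` variables
`u_q, u_{q+1}, …, u_p`. -/
def SmoothWindow (q p : ℤ) (φ : (ℤ → ℝ) → ℝ) : Prop :=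
  ∃ Φ : (Fin ((p - q).toNat + 1) → ℝ) → ℝ, ContDiff ℝ (⊤ : ℕ∞) Φ ∧
    ∀ u : ℤ → ℝ, φ u = Φ (fun i => u (q + (i.val : ℤ)))

/-! ### Smooth lattice functions -/

/-- A lattice function is smooth along every smooth finite-dimensional family of sequences.
Together with dependence on finitely many variables this is equivalent to `SmoothWindow`. -/
def LatticeSmooth (φ : (ℤ → ℝ) → ℝ) : Prop :=
  ∀ (E : Type) [NormedAddCommGroup E] [NormedSpace ℝ E] (g : E → ℤ → ℝ),
    (∀ j, ContDiff ℝ (⊤ : ℕ∞) (fun x => g x j)) → ContDiff ℝ (⊤ : ℕ∞) (fun x => φ (g x))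

lemma SmoothWindow.latticeSmooth {r p : ℤ} {φ : (ℤ → ℝ) → ℝ} (h : SmoothWindow r p φ) :
    LatticeSmooth φ := by
  obtain ⟨Φ, hΦ, h⟩ := h
  intro E _ _ g hg
  simp only [h]
  exact hΦ.comp (contDiff_pi.2 fun i => hg _)

lemma SmoothWindow.dependsOn {r p : ℤ} (hrp : r ≤ p) {φ : (ℤ → ℝ) → ℝ}
    (h : SmoothWindow r p φ) : DependsOn φ (Set.Icc r p) := by
  obtain ⟨Φ, hΦ, h⟩ := h
  intro u v huv
  rw [h, h]
  congr 1
  ext i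
  apply huv
  have := i.isLt
  constructor <;> omega

lemma smoothWindow_of_dependsOn {r p : ℤ} {φ : (ℤ → ℝ) → ℝ}
    (hs : LatticeSmooth φ) (hd : DependsOn φ (Set.Icc r p)) : SmoothWindow r p φ := by
  -- Extend a finite window of values by zero to a full sequence.
  let g : (Fin ((p - r).toNat + 1) → ℝ) → ℤ → ℝ := fun x j =>
    if h : (j - r).toNat < (p - r).toNat + 1 then x ⟨(j - r).toNat, h⟩ else 0
  refine ⟨fun x => φ (g x), hs _ g fun j => ?_, fun u => hd fun j hj => ?_⟩
  · by_cases h : (j - r).toNat < (p - r).toNat + 1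
    · simp only [g, h, dite_true]
      exact contDiff_apply ℝ ℝ _
    · simp only [g, h, dite_false]
      exact contDiff_const
  · obtain ⟨h1, h2⟩ := hj
    have h : (j - r).toNat < (p - r).toNat + 1 := by omega
    simp only [g, h, dite_true]
    congr 1
    omega

lemma LatticeSmooth.add {φ ψ : (ℤ → ℝ) → ℝ} (h : LatticeSmooth φ) (h' : LatticeSmooth ψ) :
    LatticeSmooth (fun u => φ u + ψ u) :=
  fun E _ _ g hg => (h E g hg).add (h' E g hg)

lemma LatticeSmooth.sub {φ ψ : (ℤ → ℝ) → ℝ} (h : LatticeSmooth φ) (h' : LatticeSmooth ψ) :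
    LatticeSmooth (fun u => φ u - ψ u) :=
  fun E _ _ g hg => (h E g hg).sub (h' E g hg)

lemma LatticeSmooth.shift {φ : (ℤ → ℝ) → ℝ} (h : LatticeSmooth φ) (s : ℤ) :
    LatticeSmooth (fun u => φ (shift s u)) :=
  fun E _ _ g hg => h E (fun x => _root_.shift s (g x)) fun j => hg (j + s)

lemma LatticeSmooth.update {φ : (ℤ → ℝ) → ℝ} (h : LatticeSmooth φ) (k : ℤ) (c : ℝ) :
    LatticeSmooth (fun u => φ (Function.update u k c)) := by
  intro E _ _ g hg
  refine h E (fun x => Function.update (g x) k c) fun j => ?_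
  by_cases hj : j = k
  · subst hj
    simpa using contDiff_const
  · simpa [hj] using hg j

lemma LatticeSmooth.differentiable_slice {φ : (ℤ → ℝ) → ℝ} (h : LatticeSmooth φ) (k : ℤ)
    (u : ℤ → ℝ) : Differentiable ℝ (fun x => φ (Function.update u k x)) := by
  refine (h ℝ (fun x => Function.update u k x) fun j => ?_).differentiable (by simp)
  by_cases hj : j = k
  · subst hj
    simpa using contDiff_fun_id
  · simpa [hj] using contDiff_const

/-! ### Shifts and partial derivatives -/

lemma shift_shift (a b : ℤ) (u : ℤ → ℝ) : shift a (shift b u) = shift (a + b) u := by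
  ext j
  simp [shift, add_assoc]

lemma shift_zero (u : ℤ → ℝ) : shift 0 u = u := by
  ext j
  simp [shift]

lemma shift_update (s k : ℤ) (u : ℤ → ℝ) (x : ℝ) :
    shift s (Function.update u k x) = Function.update (shift s u) (k - s) x := by
  ext j
  by_cases h : j + s = k
  · have : j = k - s := by omega
    subst this
    simp [shift]
  · have : j ≠ k - s := by omega
    simp [shift, h, this]

lemma pd_shift (s k : ℤ) (φ : (ℤ → ℝ) → ℝ) (u : ℤ → ℝ) :
    pd (fun u => φ (shift s u)) k u = pd φ (k - s) (shift s u) := by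
  simp [pd, shift_update, shift]

lemma pd_eq_zero {φ : (ℤ → ℝ) → ℝ} {S : Set ℤ} (hd : DependsOn φ S) {k : ℤ} (hk : k ∉ S)
    (u : ℤ → ℝ) : pd φ k u = 0 := by
  have : (fun x => φ (Function.update u k x)) = fun _ => φ u := by
    ext x
    refine hd fun j hj => ?_
    have : j ≠ k := fun h => hk (h ▸ hj)
    simp [this]
  simp [pd, this]

lemma pd_congr {φ : (ℤ → ℝ) → ℝ} {S : Set ℤ} (hd : DependsOn φ S) {k : ℤ} (hk : k ∈ S)
    {u v : ℤ → ℝ} (huv : ∀ j ∈ S, u j = v j) : pd φ k u = pd φ k v := by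
  have : (fun x => φ (Function.update u k x)) = fun x => φ (Function.update v k x) := by
    ext x
    refine hd fun j hj => ?_
    by_cases h : j = k
    · subst h; simp
    · simp [h, huv j hj]
  simp [pd, this, huv k hk]

/-! ### The variational derivatives and the image of `T² - 1` -/

/-- The operator `E_s φ = ∑ₖ sᵏ T⁻ᵏ(∂φ/∂uₖ)`: the variational derivative for `s = 1`, the adjoint
one for `s = -1`. The sum runs over all of `ℤ`, with finitely many nonzero terms when `φ` depends on
finitely many variables. -/
def varSum (s : ℝ) (φ : (ℤ → ℝ) → ℝ) (u : ℤ → ℝ) : ℝ :=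
  ∑ᶠ k : ℤ, s ^ k * pd φ k (shift (-k) u)

lemma support_varSum_subset {φ : (ℤ → ℝ) → ℝ} {r p : ℤ} (hd : DependsOn φ (Set.Icc r p))
    (s : ℝ) (u : ℤ → ℝ) :
    (Function.support fun k : ℤ => s ^ k * pd φ k (shift (-k) u)) ⊆
      (Finset.Icc r p : Finset ℤ) := by
  intro k hk
  by_contra hk'
  rw [Finset.coe_Icc] at hk'
  exact hk (by simp [pd_eq_zero hd hk'])

lemma varSum_eq_sum {φ : (ℤ → ℝ) → ℝ} {r p : ℤ} (hd : DependsOn φ (Set.Icc r p))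
    (s : ℝ) (u : ℤ → ℝ) :
    varSum s φ u = ∑ k ∈ Finset.Icc r p, s ^ k * pd φ k (shift (-k) u) :=
  finsum_eq_sum_of_support_subset _ (support_varSum_subset hd s u)

/-- `E_s` annihilates constants and the image of `T² - 1`. -/
lemma varSum_eq_of_eq_add {s : ℝ} (hs : s * s = 1) {φ ψ q : (ℤ → ℝ) → ℝ} {κ : ℝ} {a b r p : ℤ}
    (hψ : LatticeSmooth ψ) (hψd : DependsOn ψ (Set.Icc a b))
    (hq : LatticeSmooth q) (hqd : DependsOn q (Set.Icc r p))
    (h : ∀ u, φ u = κ + ψ u + (q (shift 2 u) - q u)) (u : ℤ → ℝ) :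
    varSum s φ u = varSum s ψ u := by
  have hs0 : s ≠ 0 := by rintro rfl; simp at hs
  set G : ℤ → ℝ := fun k => s ^ k * pd q k (shift (-k) u) with hG
  have hterm : ∀ k : ℤ, s ^ k * pd φ k (shift (-k) u) =
      s ^ k * pd ψ k (shift (-k) u) + (G (k - 2) - G k) := by
    intro k
    set v := shift (-k) u with hv
    have h1 : pd φ k v = pd ψ k v + (pd (fun u => q (shift 2 u)) k v - pd q k v) := by
      have e : φ = fun u => κ + ψ u + (q (shift 2 u) - q u) := funext h
      have d1 := (hψ.differentiable_slice k v) (v k)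
      have d2 := ((hq.shift 2).differentiable_slice k v) (v k)
      have d3 := (hq.differentiable_slice k v) (v k)
      have := ((d1.hasDerivAt.const_add κ).add (d2.hasDerivAt.sub d3.hasDerivAt)).deriv
      rw [e]
      exact this
    have h2 : s ^ (k - 2) = s ^ k := by
      rw [zpow_sub₀ hs0]
      have : s ^ (2 : ℤ) = 1 := by rw [zpow_two, hs]
      rw [this, div_one]
    have h3 : shift 2 v = shift (-(k - 2)) u := by
      rw [hv, shift_shift]; congr 1; ring
    rw [h1, pd_shift, h3, hG]
    simp only [h2]
    ring
  have fψ : (Function.support fun k : ℤ => s ^ k * pd ψ k (shift (-k) u)).Finite :=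
    (Finset.finite_toSet _).subset (support_varSum_subset hψd s u)
  have fG : (Function.support G).Finite :=
    (Finset.finite_toSet _).subset (support_varSum_subset hqd s u)
  have fG2 : (Function.support fun k : ℤ => G (k - 2)).Finite :=
    fG.preimage (f := fun k : ℤ => k - 2) (fun x _ y _ hxy => by simpa using hxy)
  have fd : (Function.support fun k : ℤ => G (k - 2) - G k).Finite :=
    (fG2.union fG).subset (Function.support_sub _ _)
  have hshift : ∑ᶠ k : ℤ, G (k - 2) = ∑ᶠ k : ℤ, G k :=
    finsum_comp_equiv (Equiv.subRight (2 : ℤ)) (f := G)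
  unfold varSum
  rw [finsum_congr hterm, finsum_add_distrib fψ fd, finsum_sub_distrib fG2 fG, hshift, sub_self,
    add_zero]

/-! ### The derivative in the top variable -/

/-- Only the indices of the same parity as the top index `N` survive in `E_1 φ + (-1)^N E_{-1} φ`,
so `∂φ/∂u_N` is determined by the terms with `k ≤ N - 2`. -/
lemma pd_top_eq {φ : (ℤ → ℝ) → ℝ} {m N : ℤ} (hmN : m ≤ N) (hd : DependsOn φ (Set.Icc m N))
    (h1 : ∀ u, varSum 1 φ u = 0) (h2 : ∀ u, varSum (-1) φ u = 0) (u : ℤ → ℝ) :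
    2 * pd φ N u = -∑ k ∈ Finset.Icc m (N - 2),
      (1 + (-1 : ℝ) ^ N * (-1) ^ k) * pd φ k (shift (N - k) u) := by
  have e1 := h1 (shift N u)
  have e2 := h2 (shift N u)
  rw [varSum_eq_sum hd] at e1 e2
  have hsq : (-1 : ℝ) ^ N * (-1) ^ N = 1 := by
    rw [← mul_zpow]; simp
  have e3 : ∑ k ∈ Finset.Icc m N,
      (1 + (-1 : ℝ) ^ N * (-1) ^ k) * pd φ k (shift (N - k) u) = 0 := by
    have : ∑ k ∈ Finset.Icc m N, (1 + (-1 : ℝ) ^ N * (-1) ^ k) * pd φ k (shift (N - k) u) =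
        (∑ k ∈ Finset.Icc m N, (1 : ℝ) ^ k * pd φ k (shift (-k) (shift N u))) + (-1 : ℝ) ^ N *
          ∑ k ∈ Finset.Icc m N, (-1 : ℝ) ^ k * pd φ k (shift (-k) (shift N u)) := by
      rw [Finset.mul_sum, ← Finset.sum_add_distrib]
      refine Finset.sum_congr rfl fun k _ => ?_
      rw [shift_shift, show -k + N = N - k by ring, one_zpow]
      ring
    rw [this, e1, e2]
    simp
  have hsub : insert N (Finset.Icc m (N - 2)) ⊆ Finset.Icc m N := by
    intro k
    simp only [Finset.mem_insert, Finset.mem_Icc]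
    omega
  rw [← Finset.sum_subset hsub, Finset.sum_insert (by simp), hsq, sub_self, shift_zero] at e3
  · linarith
  · intro k hk hk'
    have hk1 : k = N - 1 := by
      simp only [Finset.mem_insert, Finset.mem_Icc] at hk hk'
      omega
    have : (-1 : ℝ) ^ k = -(-1 : ℝ) ^ N := by
      rw [hk1, zpow_sub_one₀ (by norm_num)]
      norm_num
    rw [this, mul_neg, hsq]
    simp

lemma pd_top_eq_zero {φ : (ℤ → ℝ) → ℝ} {m N : ℤ} (hmN : m ≤ N) (hN : N < m + 2)
    (hd : DependsOn φ (Set.Icc m N))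
    (h1 : ∀ u, varSum 1 φ u = 0) (h2 : ∀ u, varSum (-1) φ u = 0) (u : ℤ → ℝ) :
    pd φ N u = 0 := by
  have := pd_top_eq hmN hd h1 h2 u
  rw [Finset.Icc_eq_empty (by omega)] at this
  simpa using this

lemma pd_top_congr {φ : (ℤ → ℝ) → ℝ} {m N : ℤ} (hmN : m ≤ N) (hd : DependsOn φ (Set.Icc m N))
    (h1 : ∀ u, varSum 1 φ u = 0) (h2 : ∀ u, varSum (-1) φ u = 0) {u v : ℤ → ℝ}
    (huv : ∀ j ∈ Set.Ici (m + 2), u j = v j) : pd φ N u = pd φ N v := by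
  have hu := pd_top_eq hmN hd h1 h2 u
  have hv := pd_top_eq hmN hd h1 h2 v
  have : ∀ k ∈ Finset.Icc m (N - 2), (1 + (-1 : ℝ) ^ N * (-1) ^ k) * pd φ k (shift (N - k) u) =
      (1 + (-1 : ℝ) ^ N * (-1) ^ k) * pd φ k (shift (N - k) v) := by
    intro k hk
    rw [Finset.mem_Icc] at hk
    congr 1
    refine pd_congr hd (by constructor <;> omega) fun j hj => huv _ ?_
    have := hj.1
    simp only [Set.mem_Ici]
    omega
  rw [Finset.sum_congr rfl this] at hu
  linarith

/-! ### Reduction of the window -/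

lemma deriv_slice (φ : (ℤ → ℝ) → ℝ) (k : ℤ) (u : ℤ → ℝ) (x : ℝ) :
    deriv (fun x => φ (Function.update u k x)) x = pd φ k (Function.update u k x) := by
  simp [pd]

/-- The forward implication, by induction on the number `n` of variables `u_m, …, u_{m+n-1}`. -/
lemma exists_of_varSum_eq_zero (n : ℕ) (m : ℤ) : ∀ φ : (ℤ → ℝ) → ℝ, LatticeSmooth φ →
    DependsOn φ (Set.Icc m (m + n - 1)) →
    (∀ u, varSum 1 φ u = 0) → (∀ u, varSum (-1) φ u = 0) →
    ∃ (κ : ℝ) (r p : ℤ) (q : (ℤ → ℝ) → ℝ), r ≤ p ∧ LatticeSmooth q ∧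
      DependsOn q (Set.Icc r p) ∧ ∀ u : ℤ → ℝ, φ u = κ + (q (shift 2 u) - q u) := by
  induction n with
  | zero =>
    intro φ hs hd _ _
    refine ⟨φ 0, 0, 0, fun _ => 0, le_rfl, fun E _ _ g hg => contDiff_const, fun _ _ _ => rfl,
      fun u => ?_⟩
    rw [sub_self, add_zero]
    refine hd fun j hj => ?_
    obtain ⟨h1, h2⟩ := hj
    push_cast at h2
    omega
  | succ n ih =>
    intro φ hs hd h1 h2
    obtain ⟨N, hN⟩ : ∃ N : ℤ, N = m + n := ⟨_, rfl⟩
    have hN' : m + ((n + 1 : ℕ) : ℤ) - 1 = N := by push_cast; omega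
    rw [hN'] at hd
    have hmN : m ≤ N := by omega
    have hdA : DependsOn (fun u => φ (Function.update u N 0)) (Set.Icc m (m + n - 1)) := by
      intro u v huv
      refine hd fun j hj => ?_
      by_cases h : j = N
      · subst h; simp
      · have : j ∈ Set.Icc m (m + n - 1) := by
          obtain ⟨a, b⟩ := hj
          constructor <;> omega
        simp [h, huv j this]
    by_cases hsmall : N < m + 2
    · -- In this range `∂φ/∂u_N = 0`, so `φ` is already a function of the shorter window.
      have hA : φ = fun u => φ (Function.update u N 0) := by
        ext u
        have := is_const_of_deriv_eq_zero (hs.differentiable_slice N u)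
          (fun x => by rw [deriv_slice]; exact pd_top_eq_zero hmN hsmall hd h1 h2 _) (u N) 0
        simpa using this
      rw [← hA] at hdA
      exact ih φ hs hdA h1 h2
    · set B : (ℤ → ℝ) → ℝ := fun u => φ u - φ (Function.update u N 0) with hB
      have hBs : LatticeSmooth B := hs.sub (hs.update N 0)
      have hBd : DependsOn B (Set.Icc (m + 2) N) := by
        intro u v huv
        -- `B` only sees the window up to `N`, so `v` may be replaced by a sequence `w` agreeing
        -- with `u` at every index from `m + 2` on.
        obtain ⟨w, hw⟩ : ∃ w : ℤ → ℝ, w = fun j => if j ≤ N then v j else u j := ⟨_, rfl⟩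
        have hwv : ∀ j, j ≤ N → w j = v j := fun j hj => by simp [hw, hj]
        have hwu : ∀ j, m + 2 ≤ j → u j = w j := fun j hj => by
          by_cases hjN : j ≤ N
          · rw [hwv j hjN]; exact huv j ⟨hj, hjN⟩
          · simp [hw, hjN]
        have hBw : B w = B v := by
          have e1 : φ w = φ v := hd fun j hj => hwv j hj.2
          have e2 : φ (Function.update w N 0) = φ (Function.update v N 0) := hd fun j hj => by
            by_cases h : j = N
            · subst h; simp
            · simp [h, hwv j hj.2]
          simp only [hB, e1, e2]
        rw [← hBw]
        have hconst := is_const_of_deriv_eq_zero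
          ((hs.differentiable_slice N u).sub (hs.differentiable_slice N w)) (fun x => by
            rw [deriv_sub (hs.differentiable_slice N u x) (hs.differentiable_slice N w x),
              deriv_slice, deriv_slice, sub_eq_zero]
            refine pd_top_congr hmN hd h1 h2 fun j hj => ?_
            by_cases h : j = N
            · subst h; simp
            · simp [h, hwu j hj]) (u N) 0
        have huN : u N = w N := hwu N (by omega)
        have e3 : φ (Function.update w N (u N)) = φ w := by rw [huN]; simp
        simp only [Pi.sub_apply, Function.update_eq_self, e3] at hconst
        simp only [hB]
        linarith
      have hCs : LatticeSmooth (fun u => B (shift (-2) u)) := hBs.shift (-2)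
      have hCd : DependsOn (fun u => B (shift (-2) u)) (Set.Icc m (N - 2)) := by
        intro u v huv
        refine hBd fun j hj => huv _ ?_
        obtain ⟨a, b⟩ := hj
        constructor <;> omega
      set ψ : (ℤ → ℝ) → ℝ := fun u => φ (Function.update u N 0) + B (shift (-2) u) with hψ
      have hψs : LatticeSmooth ψ := (hs.update N 0).add hCs
      have hψd : DependsOn ψ (Set.Icc m (m + n - 1)) := by
        intro u v huv
        have e1 := hdA huv
        have e2 := hCd fun j hj => huv j (by obtain ⟨a, b⟩ := hj; constructor <;> omega)
        exact congrArg₂ (· + ·) e1 e2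
      have hφψ : ∀ u, φ u = 0 + ψ u + (B (shift (-2) (shift 2 u)) - B (shift (-2) u)) := by
        intro u
        rw [shift_shift, show (-2 : ℤ) + 2 = 0 by norm_num, shift_zero]
        simp only [hψ, hB]
        ring
      obtain ⟨κ, r, p, q, hrp, hqs, hqd, hq⟩ := ih ψ hψs hψd
        (fun u => by
          rw [← varSum_eq_of_eq_add (by norm_num) hψs hψd hCs hCd hφψ u]; exact h1 u)
        (fun u => by
          rw [← varSum_eq_of_eq_add (by norm_num) hψs hψd hCs hCd hφψ u]; exact h2 u)
      refine ⟨κ, min r m, max p (N - 2), fun u => q u + B (shift (-2) u),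
        (min_le_left _ _).trans (hrp.trans (le_max_left _ _)), hqs.add hCs, ?_, fun u => ?_⟩
      · intro u v huv
        have e1 := hqd fun j hj => huv j ⟨(min_le_left _ _).trans hj.1, hj.2.trans (le_max_left _ _)⟩
        have e2 := hCd fun j hj =>
          huv j ⟨(min_le_right _ _).trans hj.1, hj.2.trans (le_max_right _ _)⟩
        exact congrArg₂ (· + ·) e1 e2
      · rw [hφψ u, hq u]
        ring

/-! ### The kernel -/

/-- both the variational derivative and the adjoint variational
derivative of a smooth lattice function `φ` vanish identically iff
`φ = κ + (T²-1)q` for a constant `κ` and a smooth lattice function `q` of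
finitely many lattice variables. -/
theorem double_variational_derivative_kernel
    (m1 m2 : ℤ) (hm : m2 ≤ m1) (φ : (ℤ → ℝ) → ℝ) (hφ : SmoothWindow m2 m1 φ) :
    ((∀ u : ℤ → ℝ, ∑ k ∈ Finset.Icc m2 m1, pd φ k (shift (-k) u) = 0) ∧
     (∀ u : ℤ → ℝ, ∑ k ∈ Finset.Icc m2 m1, (-1 : ℝ) ^ k * pd φ k (shift (-k) u) = 0)) ↔
      ∃ (κ : ℝ) (r p : ℤ) (q : (ℤ → ℝ) → ℝ), r ≤ p ∧ SmoothWindow r p q ∧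
        ∀ u : ℤ → ℝ, φ u = κ + (q (shift 2 u) - q u) := by
  have hs := hφ.latticeSmooth
  have hd := hφ.dependsOn hm
  have e1 : ∀ u, varSum 1 φ u = ∑ k ∈ Finset.Icc m2 m1, pd φ k (shift (-k) u) := fun u => by
    simp [varSum_eq_sum hd]
  have e2 := varSum_eq_sum hd (-1)
  simp only [← e1, ← e2]
  constructor
  · rintro ⟨h1, h2⟩
    obtain ⟨κ, r, p, q, hrp, hqs, hqd, hq⟩ :=
      exists_of_varSum_eq_zero (m1 - m2 + 1).toNat m2 φ hs
        (by rwa [show m2 + ((m1 - m2 + 1).toNat : ℤ) - 1 = m1 by omega]) h1 h2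
    exact ⟨κ, r, p, q, hrp, smoothWindow_of_dependsOn hqs hqd, hq⟩
  · rintro ⟨κ, r, p, q, hrp, hqw, hq⟩
    have key : ∀ s : ℝ, s * s = 1 → ∀ u, varSum s φ u = 0 := fun s hs u => by
      rw [varSum_eq_of_eq_add (ψ := fun _ => 0) (κ := κ) (a := 0) (b := 0) hs
        (fun E _ _ g hg => contDiff_const) (fun _ _ _ => rfl) hqw.latticeSmooth (hqw.dependsOn hrp)
        (fun u => by rw [hq u, add_zero]) u]
      simp [varSum, pd]
    exact ⟨key 1 (by norm_num), key (-1) (by norm_num)⟩
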